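/- Suppose the triangulated category T has arbitrary coproducts, the pre-weight structure (U≥0, U≤0) on T is left convergent, and its core C satisfies Hom_T(A, Σ^{−k}(B)) = 0 for all A, B ∈ C and all k ≥ 1. Then Hom_T(X, Y) = 0 for every X ∈ U≤0 and every Y ∈ U[1,m], for all m ≥ 1. -/

import Mathlib

/-!
Everything reduces to the vanishing of `Hom(Σᵃ C, Σ⁻ᵇ C)` for `a ≥ 0`, `b ≥ 1`, which is the
hypothesis on the core up to a shift (`core_hom_zero`).

In the first variable: the stage `Xₙ` of a left tower is a finite iterated extension of objects of
`C, Σ C, …, Σⁿ C`, so `Hom(Xₙ, Σ⁻ᵇ C) = 0` (`LeftTower.hom_zero`). A morphism from the homotopy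
colimit `X` to `Z = Σ⁻ᵇ C` vanishes on `∐ Xₙ`, hence factors through `Σ (∐ Xₙ)`; but
`Hom(Σ (∐ Xₙ), Z) = Hom(∐ Xₙ, Σ⁻¹ Z)` is also zero, because `Σ⁻¹ Z` lies in `Σ⁻ᵇ⁻¹ C`. So
`Hom(U≤0, Σ⁻ᵇ C) = 0` (`le_hom_zero`).

In the second variable: the weight decomposition of an object of `U[1,m]` presents it as an
extension of an object of `U[1,m-1]` by an object of `Σ⁻ᵐ C`, and one inducts on `m`
(`hom_zero_of_bounded`).
-/

open CategoryTheory Category Limits Pretriangulated ZeroObject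

universe v u

variable {T : Type u} [Category.{v} T] [HasZeroObject T] [HasShift T ℤ] [Preadditive T]
  [∀ n : ℤ, (CategoryTheory.shiftFunctor T n).Additive] [Pretriangulated T]

/-- `Z ∈ star X Y` iff there is a distinguished triangle `A → Z → B → A⟦1⟧`
with `A ∈ X` and `B ∈ Y`. -/
def star (X Y : Set T) : Set T :=
  {Z | ∃ (A B : T) (f : A ⟶ Z) (g : Z ⟶ B) (h : B ⟶ A⟦(1:ℤ)⟧),
    A ∈ X ∧ B ∈ Y ∧ Triangle.mk f g h ∈ distTriang T}

/-- The cone of `f` lies in `S`. -/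
def coneIn {A B : T} (f : A ⟶ B) (S : Set T) : Prop :=
  ∃ (Z : T) (g : B ⟶ Z) (h : Z ⟶ A⟦(1:ℤ)⟧),
    Triangle.mk f g h ∈ (distTriang T) ∧ Z ∈ S

/-- `U≥m = Σ^{-m}(U≥0)`. -/
def geM (ge : Set T) (m : ℤ) : Set T := {X | X⟦m⟧ ∈ ge}

/-- `U≤m = Σ^{-m}(U≤0)`. -/
def leM (le : Set T) (m : ℤ) : Set T := {X | X⟦m⟧ ∈ le}

/-- `U[m,n] = U≥m ∩ U≤n`. -/
def interval (ge le : Set T) (m n : ℤ) : Set T := geM ge m ∩ leM le n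

/-- The core `C = U≥0 ∩ U≤0`. -/
def coreSet (ge le : Set T) : Set T := ge ∩ le

/-- `Σ^{-k}(C)`. -/
def coreShift (ge le : Set T) (k : ℤ) : Set T := {X | X⟦k⟧ ∈ coreSet ge le}

/-- `U₊ = ⋂ₘ U≥m`. -/
def plusSet (ge : Set T) : Set T := {X | ∀ m : ℤ, X ∈ geM ge m}

/-- `U₋ = ⋂ₘ U≤m`. -/
def minusSet (le : Set T) : Set T := {X | ∀ m : ℤ, X ∈ leM le m}

/-- `U_b = ⋃_{m ≤ n} U[m,n]`. -/
def boundedSet (ge le : Set T) : Set T :=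
  {X | ∃ m n : ℤ, m ≤ n ∧ X ∈ interval ge le m n}

/-- A pre-weight structure: a pair of full additive subcategories (given by their
classes of objects, closed under isomorphisms, containing the zero objects and closed
under finite biproducts) with `U≥0 ∗ Σ(U≤0) = T`, `U≥0` closed under `Σ⁻¹` and
extensions, and `U≤0` closed under `Σ` and extensions. -/
structure IsPreWeightStructure (ge le : Set T) : Prop where
  ge_iso : ∀ ⦃X Y : T⦄, (X ≅ Y) → X ∈ ge → Y ∈ ge
  le_iso : ∀ ⦃X Y : T⦄, (X ≅ Y) → X ∈ le → Y ∈ le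
  ge_zero : ∀ Z : T, IsZero Z → Z ∈ ge
  le_zero : ∀ Z : T, IsZero Z → Z ∈ le
  ge_biprod : ∀ ⦃X Y : T⦄ (b : BinaryBicone X Y), b.IsBilimit → X ∈ ge → Y ∈ ge → b.pt ∈ ge
  le_biprod : ∀ ⦃X Y : T⦄ (b : BinaryBicone X Y), b.IsBilimit → X ∈ le → Y ∈ le → b.pt ∈ le
  decomp : ∀ Z : T, Z ∈ star ge (leM le (-1))
  ge_shiftNeg : ∀ X ∈ ge, X⟦(-1:ℤ)⟧ ∈ ge
  ge_ext : star ge ge ⊆ ge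
  le_shiftPos : ∀ X ∈ le, X⟦(1:ℤ)⟧ ∈ le
  le_ext : star le le ⊆ le

/-- A left tower of `X ∈ U≤0` (Proposition 2.7(1)). -/
structure LeftTower (ge le : Set T) (X : T) where
  obj : ℕ → T
  ι : ∀ n : ℕ, obj n ⟶ X
  φ : ∀ n : ℕ, obj n ⟶ obj (n + 1)
  mem : ∀ n : ℕ, obj n ∈ interval ge le (-(n : ℤ)) 0
  cone_ι : ∀ n : ℕ, coneIn (ι n) (leM le (-(n : ℤ) - 1))
  cone_φ : ∀ n : ℕ, coneIn (φ n) (coreShift ge le (-((n : ℤ) + 1)))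
  comm : ∀ n : ℕ, ι n = φ n ≫ ι (n + 1)

/-- A right tower of `Y ∈ U≥0` (Proposition 2.7(2)). -/
structure RightTower (ge le : Set T) (Y : T) where
  obj : ℕ → T
  π : ∀ n : ℕ, Y ⟶ obj n
  ψ : ∀ n : ℕ, obj (n + 1) ⟶ obj n
  mem : ∀ n : ℕ, obj n ∈ interval ge le 0 (n : ℤ)
  cone_π : ∀ n : ℕ, coneIn (π n) (geM ge (n : ℤ))
  cone_ψ : ∀ n : ℕ, coneIn (ψ n) (coreShift ge le (n : ℤ))
  comm : ∀ n : ℕ, π n = π (n + 1) ≫ ψ n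

section

variable [HasColimitsOfShape (Discrete ℕ) T] [HasLimitsOfShape (Discrete ℕ) T]

/-- The morphism `1 - φ : ∐ Xₙ ⟶ ∐ Xₙ` of a left tower. -/
noncomputable def LeftTower.oneSubPhi {ge le : Set T} {X : T} (tw : LeftTower ge le X) :
    (∐ tw.obj) ⟶ (∐ tw.obj) :=
  Sigma.desc fun n => Sigma.ι tw.obj n - tw.φ n ≫ Sigma.ι tw.obj (n + 1)

/-- A left tower is convergent if, completing `1 - φ` to an exact triangle
`∐ Xₙ → ∐ Xₙ →^γ hocolim Xₙ → Σ(∐ Xₙ)`, there is an isomorphism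
`κ : hocolim Xₙ ≅ X` with `κ ∘ γ ∘ incₙ = ιₙ` for all `n`. -/
def LeftTower.Convergent {ge le : Set T} {X : T} (tw : LeftTower ge le X) : Prop :=
  ∃ (H : T) (γ : (∐ tw.obj) ⟶ H) (δ : H ⟶ (∐ tw.obj)⟦(1:ℤ)⟧),
    Triangle.mk tw.oneSubPhi γ δ ∈ (distTriang T) ∧
    ∃ κ : H ≅ X, ∀ n : ℕ, Sigma.ι tw.obj n ≫ γ ≫ κ.hom = tw.ι n

/-- The morphism `1 - ψ : ∏ Yₙ ⟶ ∏ Yₙ` of a right tower. -/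
noncomputable def RightTower.oneSubPsi {ge le : Set T} {Y : T} (tw : RightTower ge le Y) :
    (∏ᶜ tw.obj) ⟶ (∏ᶜ tw.obj) :=
  Pi.lift fun n => Pi.π tw.obj n - Pi.π tw.obj (n + 1) ≫ tw.ψ n

/-- A right tower is convergent if, completing `1 - ψ` to an exact triangle
`holim Yₙ →^σ ∏ Yₙ → ∏ Yₙ → Σ(holim Yₙ)`, there is an isomorphism
`λ : Y ≅ holim Yₙ` with `prₙ ∘ σ ∘ λ = πₙ` for all `n`. -/
def RightTower.Convergent {ge le : Set T} {Y : T} (tw : RightTower ge le Y) : Prop :=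
  ∃ (H : T) (σ : H ⟶ ∏ᶜ tw.obj) (δ : (∏ᶜ tw.obj) ⟶ H⟦(1:ℤ)⟧),
    Triangle.mk σ tw.oneSubPsi δ ∈ (distTriang T) ∧
    ∃ lam : Y ≅ H, ∀ n : ℕ, lam.hom ≫ σ ≫ Pi.π tw.obj n = tw.π n

/-- The pre-weight structure is left convergent. -/
def LeftConvergent (ge le : Set T) : Prop :=
  ∀ X : T, X ∈ le → ∃ tw : LeftTower ge le X, tw.Convergent

/-- The pre-weight structure is right convergent. -/
def RightConvergent (ge le : Set T) : Prop :=
  ∀ Y : T, Y ∈ ge → ∃ tw : RightTower ge le Y, tw.Convergent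

/-- The pre-weight structure is two-sided convergent. -/
def TwoSidedConvergent (ge le : Set T) : Prop :=
  LeftConvergent ge le ∧ RightConvergent ge le

end

set_option linter.unusedSectionVars false

/-- For an isomorphism-closed class, membership of an iterated shift depends only on the total
shift. -/
lemma shift_shift_mem_iff {S : Set T} (hS : ∀ ⦃X Y : T⦄, (X ≅ Y) → X ∈ S → Y ∈ S)
    (X : T) (a b c : ℤ) (h : a + b = c) : X⟦a⟧⟦b⟧ ∈ S ↔ X⟦c⟧ ∈ S :=
  ⟨hS ((shiftFunctorAdd' T a b c h).app X).symm, hS ((shiftFunctorAdd' T a b c h).app X)⟩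

lemma shift_zero_mem_iff {S : Set T} (hS : ∀ ⦃X Y : T⦄, (X ≅ Y) → X ∈ S → Y ∈ S)
    (X : T) (a : ℤ) (h : a = 0) : X⟦a⟧ ∈ S ↔ X ∈ S := by
  subst h
  exact ⟨hS ((shiftFunctorZero T ℤ).app X), hS ((shiftFunctorZero T ℤ).app X).symm⟩

lemma core_iso {ge le : Set T} (W : IsPreWeightStructure ge le) ⦃X Y : T⦄ (e : X ≅ Y)
    (h : X ∈ coreSet ge le) : Y ∈ coreSet ge le :=
  ⟨W.ge_iso e h.1, W.le_iso e h.2⟩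

lemma ge_shift_neg {ge le : Set T} (W : IsPreWeightStructure ge le) {X : T} (hX : X ∈ ge)
    (n : ℕ) : X⟦-(n : ℤ)⟧ ∈ ge := by
  induction n with
  | zero => exact (shift_zero_mem_iff W.ge_iso X _ (by simp)).2 hX
  | succ n ih =>
    exact (shift_shift_mem_iff W.ge_iso X (-(n : ℤ)) (-1) _ (by push_cast; ring)).1
      (W.ge_shiftNeg _ ih)

lemma hom_zero_of_shift {X Y : T} (n : ℤ) (h : ∀ g : X⟦n⟧ ⟶ Y⟦n⟧, g = 0) (f : X ⟶ Y) :
    f = 0 :=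
  (shiftFunctor T n).map_injective (by rw [h (f⟦n⟧'), Functor.map_zero])

/-- `Hom(Σᵃ C, Σ⁻ᵇ C) = 0` for `a ≥ 0` and `b ≥ 1`. -/
lemma core_hom_zero {ge le : Set T}
    (hC : ∀ A B : T, A ∈ coreSet ge le → B ∈ coreSet ge le →
      ∀ k : ℕ, 1 ≤ k → ∀ f : A ⟶ B⟦-(k : ℤ)⟧, f = 0)
    {A B : T} (a b : ℕ) (hb : 1 ≤ b) (hA : A ∈ coreShift ge le (-(a : ℤ)))
    (hB : B ∈ coreShift ge le (b : ℤ)) (f : A ⟶ B) : f = 0 := by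
  refine hom_zero_of_shift (-(a : ℤ)) (fun g => ?_) f
  let e := (shiftFunctorAdd' T (b : ℤ) (-((a + b : ℕ) : ℤ)) (-(a : ℤ))
    (by push_cast; ring)).app B
  have h : g ≫ e.hom = 0 := hC _ _ hA hB (a + b) (by omega) _
  exact (cancel_mono e.hom).1 (by rw [h, zero_comp])

lemma LeftTower.hom_zero {ge le : Set T} (W : IsPreWeightStructure ge le)
    (hC : ∀ A B : T, A ∈ coreSet ge le → B ∈ coreSet ge le →
      ∀ k : ℕ, 1 ≤ k → ∀ f : A ⟶ B⟦-(k : ℤ)⟧, f = 0)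
    {X : T} (tw : LeftTower ge le X) {B : T} (b : ℕ) (hb : 1 ≤ b)
    (hB : B ∈ coreShift ge le (b : ℤ)) (n : ℕ) (f : tw.obj n ⟶ B) : f = 0 := by
  induction n with
  | zero =>
    obtain ⟨h1, h2⟩ := tw.mem 0
    refine core_hom_zero hC 0 b hb ⟨h1, ?_⟩ hB f
    exact (shift_zero_mem_iff W.le_iso _ _ (by simp)).2
      ((shift_zero_mem_iff W.le_iso _ _ rfl).1 h2)
  | succ n ih =>
    obtain ⟨Z, g, h, hT, hZ⟩ := tw.cone_φ n
    obtain ⟨k, hk⟩ : ∃ k : Z ⟶ B, f = g ≫ k := Triangle.yoneda_exact₂ _ hT f (ih _)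
    have hk0 : k = 0 :=
      core_hom_zero hC (n + 1) b hb (by push_cast; exact hZ) hB k
    rw [hk, hk0, comp_zero]

/-- `Hom(U≤0, Σ⁻ᵇ C) = 0` for `b ≥ 1`: the one place where convergence is used. -/
lemma le_hom_zero [HasColimitsOfShape (Discrete ℕ) T]
    {ge le : Set T} (W : IsPreWeightStructure ge le) (hconv : LeftConvergent ge le)
    (hC : ∀ A B : T, A ∈ coreSet ge le → B ∈ coreSet ge le →
      ∀ k : ℕ, 1 ≤ k → ∀ f : A ⟶ B⟦-(k : ℤ)⟧, f = 0)
    {X B : T} (hX : X ∈ le) (b : ℕ) (hb : 1 ≤ b)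
    (hB : B ∈ coreShift ge le (b : ℤ)) (f : X ⟶ B) : f = 0 := by
  obtain ⟨tw, H, γ, δ, hT, κ, -⟩ := hconv X hX
  have hγ : γ ≫ κ.hom ≫ f = 0 :=
    Sigma.hom_ext _ _ fun n => by
      rw [tw.hom_zero W hC b hb hB n (Sigma.ι tw.obj n ≫ γ ≫ κ.hom ≫ f), comp_zero]
  obtain ⟨k, hk⟩ : ∃ k : (∐ tw.obj)⟦(1 : ℤ)⟧ ⟶ B, κ.hom ≫ f = δ ≫ k :=
    Triangle.yoneda_exact₃ _ hT (κ.hom ≫ f) hγ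
  have hk0 : k = 0 := by
    refine hom_zero_of_shift (-1) (fun g => ?_) k
    -- Transport along `Σ⁻¹ Σ (∐ Xₙ) ≅ ∐ Xₙ`, so that no compatibility of shifts with
    -- coproducts is needed.
    let e : (∐ tw.obj)⟦(1 : ℤ)⟧⟦(-1 : ℤ)⟧ ≅ ∐ tw.obj :=
      (shiftFunctorCompIsoId T (1 : ℤ) (-1) (by ring)).app (∐ tw.obj)
    have hB' : B⟦(-1 : ℤ)⟧ ∈ coreShift ge le ((b + 1 : ℕ) : ℤ) :=
      (shift_shift_mem_iff (core_iso W) B (-1) _ (b : ℤ) (by push_cast; ring)).2 hB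
    have h : e.inv ≫ g = 0 :=
      Sigma.hom_ext _ _ fun n => by
        rw [tw.hom_zero W hC (b + 1) (by omega) hB' n (Sigma.ι tw.obj n ≫ e.inv ≫ g), comp_zero]
    exact (cancel_epi e.inv).1 (by rw [h, comp_zero])
  have h0 : κ.hom ≫ f = 0 := by rw [hk, hk0, comp_zero]
  exact (cancel_epi κ.hom).1 (by rw [h0, comp_zero])

/-- `Hom(U≤-n-1, U[-n,0]) = 0`. This is the `n+1`-fold suspension of `Hom(U≤0, U[1,n+1]) = 0`; with
this normalisation the weight decomposition applies to `Y` itself. -/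
lemma hom_zero_of_bounded [HasColimitsOfShape (Discrete ℕ) T]
    {ge le : Set T} (W : IsPreWeightStructure ge le) (hconv : LeftConvergent ge le)
    (hC : ∀ A B : T, A ∈ coreSet ge le → B ∈ coreSet ge le →
      ∀ k : ℕ, 1 ≤ k → ∀ f : A ⟶ B⟦-(k : ℤ)⟧, f = 0)
    (n : ℕ) {X Y : T} (hX : X⟦-((n + 1 : ℕ) : ℤ)⟧ ∈ le) (hY : Y ∈ le)
    (hY' : Y⟦-(n : ℤ)⟧ ∈ ge) (f : X ⟶ Y) : f = 0 := by
  have key : ∀ (m : ℕ) {X A : T}, X⟦-((m + 1 : ℕ) : ℤ)⟧ ∈ le → A ∈ coreSet ge le →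
      ∀ f : X ⟶ A, f = 0 := fun m X A hX hA f =>
    hom_zero_of_shift (-((m + 1 : ℕ) : ℤ)) (le_hom_zero W hconv hC hX (m + 1) (by omega)
      ((shift_shift_mem_iff (core_iso W) A _ _ 0 (by ring)).2
        ((shift_zero_mem_iff (core_iso W) A 0 rfl).2 hA))) f
  induction n generalizing X Y with
  | zero => exact key 0 hX ⟨(shift_zero_mem_iff W.ge_iso Y _ (by simp)).1 hY', hY⟩ f
  | succ n ih =>
    obtain ⟨A, B, i, p, d, hA, hB, hT⟩ := W.decomp Y
    have hAle : A ∈ le :=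
      W.le_ext ⟨_, _, _, _, _, hB, hY, inv_rot_of_distTriang _ hT⟩
    -- The triangle `Y ⟶ B ⟶ A⟦1⟧`, shifted by `-(n+1)`, exhibits `B⟦-(n+1)⟧` as an extension.
    have hBge : B⟦-((n + 1 : ℕ) : ℤ)⟧ ∈ ge :=
      W.ge_ext ⟨_, _, _, _, _, hY',
        (shift_shift_mem_iff W.ge_iso A 1 _ (-(n : ℤ)) (by push_cast; ring)).2
          (ge_shift_neg W hA n),
        Triangle.shift_distinguished _ (rot_of_distTriang _ hT) (-((n + 1 : ℕ) : ℤ))⟩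
    have hp : f ≫ p = 0 := by
      refine hom_zero_of_shift (-1) (fun g => ih ?_ hB ?_ g) (f ≫ p)
      · exact (shift_shift_mem_iff W.le_iso X _ _ _ (by push_cast; ring)).2 hX
      · exact (shift_shift_mem_iff W.ge_iso B _ _ _ (by push_cast; ring)).2 hBge
    obtain ⟨k, hk⟩ : ∃ k : X ⟶ A, f = k ≫ i := Triangle.coyoneda_exact₂ _ hT f hp
    have hk0 : k = 0 := key (n + 1) hX ⟨hA, hAle⟩ k
    rw [hk, hk0, zero_comp]

/-- Lemma 3.3: if `T` has arbitrary coproducts, the pre-weight structure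
is left convergent and `Hom(C, Σ^{-k}(C)) = 0` for `k ≥ 1`, then `Hom(U≤0, U[1,m]) = 0`
for all `m ≥ 1`. -/
theorem preWeightStructure_hom_vanishing_of_leftConvergent
    [HasCoproducts.{v} T] [HasColimitsOfShape (Discrete ℕ) T] [HasLimitsOfShape (Discrete ℕ) T]
    {ge le : Set T} (W : IsPreWeightStructure ge le)
    (hconv : LeftConvergent ge le)
    (hC : ∀ A B : T, A ∈ coreSet ge le → B ∈ coreSet ge le →
      ∀ k : ℕ, 1 ≤ k → ∀ f : A ⟶ B⟦-(k : ℤ)⟧, f = 0)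
    (m : ℕ) (hm : 1 ≤ m) (X Y : T)
    (hX : X ∈ le) (hY : Y ∈ interval ge le 1 (m : ℤ)) (f : X ⟶ Y) : f = 0 := by
  obtain ⟨n, rfl⟩ : ∃ n, m = n + 1 := ⟨m - 1, by omega⟩
  refine hom_zero_of_shift ((n + 1 : ℕ) : ℤ)
    (hom_zero_of_bounded W hconv hC n ?_ hY.2 ?_) f
  · exact (shift_shift_mem_iff W.le_iso X _ _ 0 (by ring)).2
      ((shift_zero_mem_iff W.le_iso X 0 rfl).2 hX)
  · exact (shift_shift_mem_iff W.ge_iso Y _ _ 1 (by push_cast; ring)).2 hY.1
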